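/- For every integer d ≥ 1 there exists a constant A ≥ 1 depending only on d with the following property. Let δ ∈ (0,1), n ≥ 1, let k be an integer with k ≥ A, and let η > 0 satisfy η ≤ δ^A·n^{-A}·k^{-k}. Let μ be a probability measure on ℝ^n that approximately matches the moments of the standard Gaussian up to degree k with slack η, and let p be a polynomial in n real variables of total degree at most d whose sum of squares of coefficients equals 1. Then there exist an integer N ≥ 1 and a multilinear polynomial p̂ in n·N real variables of total degree at most d such that, with ν_N the pushforward of γ_N under g ↦ (g_j − (1/N)·Σ_{j'} g_{j'})_j and T : ℝ^n × (ℝ^N)^n → ℝ^{n×N} defined by T(x,z)_{(i,j)} = x_i/√N + (z_i)_j, one has (μ ⊗ ν_N^{⊗n})({(x,z) : |p(x) − p̂(T(x,z))| > δ}) < δ and (γₙ ⊗ ν_N^{⊗n})({(y,z) : |p(y) − p̂(T(y,z))| > δ}) < δ. -/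

import Mathlib

open MeasureTheory ProbabilityTheory

/-- The standard Gaussian measure on `ι → ℝ` (product of `N(0,1)`). -/
noncomputable def stdGaussianPi (ι : Type) [Fintype ι] : Measure (ι → ℝ) :=
  Measure.pi fun _ => gaussianReal 0 1

/-- `μ` approximately matches the moments of the standard Gaussian up to degree `k`
with slack `η`. -/
def MomentMatches {ι : Type} [Fintype ι] (k : ℕ) (η : ℝ)
    (μ : Measure (ι → ℝ)) : Prop :=
  ∀ α : ι → ℕ, (∑ i, α i) ≤ k →
    Integrable (fun x => ∏ i, |x i| ^ α i) μ ∧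
    |(∫ x, ∏ i, (x i) ^ α i ∂μ) - ∫ y, ∏ i, (y i) ^ α i ∂(stdGaussianPi ι)| ≤ η

/-- The centered Gaussian measure on `ℝ^N` with variances `1 - 1/N` and pairwise
covariances `-1/N`, realized as the pushforward of the standard Gaussian under
`g ↦ g - (mean of g) · (1,…,1)`. -/
noncomputable def nuN (N : ℕ) : Measure (Fin N → ℝ) :=
  Measure.map (fun g : Fin N → ℝ => fun j => g j - (1 / (N : ℝ)) * ∑ j', g j')
    (stdGaussianPi (Fin N))

open Filter Topology

/-- Limits of the normalized power sums. -/
noncomputable def limP (x : ℝ) (i : ℕ) : ℝ := if i = 1 then x else if i = 2 then 1 else 0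

/-- Regular triangular arrays. -/
def RegArr (x : ℝ) (X : (N : ℕ) → Fin N → ℝ) : Prop :=
  ∀ i, 1 ≤ i → Tendsto (fun N : ℕ => (∑ j, X N j ^ i) / (Real.sqrt N) ^ i) atTop (𝓝 (limP x i))

/-- Normalized Hermite polynomials. -/
noncomputable def hermN (x : ℝ) : ℕ → ℝ
  | 0 => 1
  | 1 => x
  | (c + 2) => (x * hermN x (c + 1) - hermN x c) / ((c : ℝ) + 2)

lemma newton_eval (N : ℕ) (X : Fin N → ℝ) (s : ℝ) (k : ℕ) :
    (k : ℝ) * (MvPolynomial.eval X (MvPolynomial.esymm (Fin N) ℝ k) / s ^ k) =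
      (-1) ^ (k + 1) * ∑ a ∈ (Finset.HasAntidiagonal.antidiagonal k).filter (fun a => a.1 < k),
        (-1) ^ a.1 * (MvPolynomial.eval X (MvPolynomial.esymm (Fin N) ℝ a.1) / s ^ a.1) *
          ((∑ j, X j ^ a.2) / s ^ a.2) := by
  have h := congrArg (MvPolynomial.eval X) (MvPolynomial.mul_esymm_eq_sum (Fin N) ℝ k)
  simp only [map_mul, map_natCast, map_sum, map_pow, map_neg, map_one] at h
  rw [← mul_div_assoc, h, mul_div_assoc, Finset.sum_div]
  congr 1
  apply Finset.sum_congr rfl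
  intro a ha
  have ha' : a.1 + a.2 = k := by simpa using (Finset.mem_filter.1 ha).1
  rw [← ha', pow_add]
  simp only [MvPolynomial.psum, map_sum, map_pow, MvPolynomial.eval_X]
  rw [← mul_div_assoc ((-1:ℝ) ^ a.1), div_mul_div_comm]

lemma esymm_tendsto (x : ℝ) (X : (N : ℕ) → Fin N → ℝ) (hX : RegArr x X) (c : ℕ) :
    Tendsto (fun N : ℕ => MvPolynomial.eval (X N) (MvPolynomial.esymm (Fin N) ℝ c) /
      (Real.sqrt N) ^ c) atTop (𝓝 (hermN x c)) := by
  induction c using Nat.strong_induction_on with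
  | _ c ih =>
  match c, ih with
  | 0, _ => simp [MvPolynomial.esymm_zero, hermN]
  | 1, _ =>
    have := hX 1 le_rfl
    simpa [limP, hermN, MvPolynomial.esymm_one] using this
  | c + 2, ih =>
    have hk : ((c + 2 : ℕ) : ℝ) ≠ 0 := by positivity
    have e : ∀ N : ℕ, MvPolynomial.eval (X N) (MvPolynomial.esymm (Fin N) ℝ (c+2)) /
      (Real.sqrt N) ^ (c+2) = ((-1) ^ ((c+2) + 1) * ∑ a ∈ (Finset.HasAntidiagonal.antidiagonal (c+2)).filter (fun a => a.1 < c+2),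
        (-1) ^ a.1 * (MvPolynomial.eval (X N) (MvPolynomial.esymm (Fin N) ℝ a.1) / (Real.sqrt N) ^ a.1) *
          ((∑ j, X N j ^ a.2) / (Real.sqrt N) ^ a.2)) / ((c + 2 : ℕ) : ℝ) := by
      intro N
      rw [← newton_eval, mul_div_cancel_left₀ _ hk]
    simp_rw [e]
    have lim : hermN x (c+2) = ((-1) ^ ((c+2) + 1) * ∑ a ∈ (Finset.HasAntidiagonal.antidiagonal (c+2)).filter (fun a => a.1 < c+2),
        (-1) ^ a.1 * hermN x a.1 * limP x a.2) / ((c + 2 : ℕ) : ℝ) := by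
      have hs : ∑ a ∈ (Finset.HasAntidiagonal.antidiagonal (c+2)).filter (fun a => a.1 < c+2),
        (-1) ^ a.1 * hermN x a.1 * limP x a.2 =
        ∑ a ∈ ({(c+1,1),(c,2)} : Finset (ℕ × ℕ)), (-1) ^ a.1 * hermN x a.1 * limP x a.2 := by
        symm
        apply Finset.sum_subset
        · intro a ha
          simp only [Finset.mem_insert, Finset.mem_singleton] at ha
          rcases ha with rfl | rfl <;> simp
        · rintro ⟨a, b⟩ ha hb
          simp only [Finset.mem_insert, Finset.mem_singleton, Finset.mem_filter, Finset.HasAntidiagonal.mem_antidiagonal, Prod.mk.injEq] at ha hb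
          have h1 : b ≠ 1 := by omega
          have h2 : b ≠ 2 := by omega
          simp [limP, h1, h2]
      rw [hs, Finset.sum_pair (by simp)]
      simp only [limP, hermN]
      push_cast
      congr 1
      have : ((-1 : ℝ) ^ c) * (-1) ^ c = 1 := by rw [← mul_pow]; simp
      simp only [pow_succ]
      norm_num
      linear_combination (-(hermN x (c+1) * x) + hermN x c) * this
    rw [lim]
    refine Tendsto.div_const (Tendsto.const_mul _ (tendsto_finsetSum _ ?_)) _
    rintro ⟨a, b⟩ ha
    simp only [Finset.mem_filter, Finset.HasAntidiagonal.mem_antidiagonal] at ha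
    exact ((ih a ha.2).const_mul _).mul (hX b (by omega))

/-- Functions of one variable that are limits of multilinear polynomials. -/
def GoodFn (f : ℝ → ℝ) (a : ℕ) : Prop :=
  ∃ Q : (N : ℕ) → MvPolynomial (Fin N) ℝ,
    (∀ N j, (Q N).degreeOf j ≤ 1) ∧ (∀ N, (Q N).totalDegree ≤ a) ∧
    ∀ x X, RegArr x X → Tendsto (fun N => MvPolynomial.eval (X N) (Q N)) atTop (𝓝 (f x))

lemma GoodFn.add {f g : ℝ → ℝ} {a : ℕ} (hf : GoodFn f a) (hg : GoodFn g a) :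
    GoodFn (fun x => f x + g x) a := by
  obtain ⟨Q, h1, h2, h3⟩ := hf
  obtain ⟨R, k1, k2, k3⟩ := hg
  refine ⟨fun N => Q N + R N, fun N j => ?_, fun N => ?_, fun x X hX => ?_⟩
  · exact (MvPolynomial.degreeOf_add_le _ _ _).trans (max_le (h1 N j) (k1 N j))
  · exact (MvPolynomial.totalDegree_add _ _).trans (max_le (h2 N) (k2 N))
  · simpa using (h3 x X hX).add (k3 x X hX)

lemma GoodFn.smul {f : ℝ → ℝ} {a : ℕ} (r : ℝ) (hf : GoodFn f a) :
    GoodFn (fun x => r * f x) a := by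
  obtain ⟨Q, h1, h2, h3⟩ := hf
  refine ⟨fun N => MvPolynomial.C r * Q N, fun N j => ?_, fun N => ?_, fun x X hX => ?_⟩
  · exact (MvPolynomial.degreeOf_C_mul_le _ _ _).trans (h1 N j)
  · refine (MvPolynomial.totalDegree_mul _ _).trans ?_
    simpa using h2 N
  · simpa using (h3 x X hX).const_mul r

lemma GoodFn.mono {f : ℝ → ℝ} {a b : ℕ} (hf : GoodFn f a) (h : a ≤ b) : GoodFn f b := by
  obtain ⟨Q, h1, h2, h3⟩ := hf
  exact ⟨Q, h1, fun N => (h2 N).trans h, h3⟩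

lemma degreeOf_prodX_le {σ : Type} [DecidableEq σ] (t : Finset σ) (j : σ) :
    (∏ i ∈ t, (MvPolynomial.X i : MvPolynomial σ ℝ)).degreeOf j ≤ 1 := by
  refine (MvPolynomial.degreeOf_prod_le _ _ _).trans ?_
  simp only [MvPolynomial.degreeOf_X]
  rw [Finset.sum_ite_eq]
  split_ifs <;> simp

lemma esymm_deg (N c : ℕ) (j : Fin N) : (MvPolynomial.esymm (Fin N) ℝ c).degreeOf j ≤ 1 := by
  unfold MvPolynomial.esymm
  refine (MvPolynomial.degreeOf_sum_le _ _ _).trans (Finset.sup_le fun t _ => degreeOf_prodX_le t j)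

lemma esymm_tdeg (N c : ℕ) : (MvPolynomial.esymm (Fin N) ℝ c).totalDegree ≤ c := by
  unfold MvPolynomial.esymm
  refine MvPolynomial.totalDegree_finsetSum_le fun t ht => ?_
  refine (MvPolynomial.totalDegree_finsetProd _ _).trans ?_
  simp [(Finset.mem_powersetCard.1 ht).2]

lemma goodFn_herm (c : ℕ) : GoodFn (fun x => hermN x c) c := by
  refine ⟨fun N => MvPolynomial.C (1 / (Real.sqrt N) ^ c) * MvPolynomial.esymm (Fin N) ℝ c,
    fun N j => (MvPolynomial.degreeOf_C_mul_le _ _ _).trans (esymm_deg N c j), fun N => ?_,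
    fun x X hX => ?_⟩
  · refine (MvPolynomial.totalDegree_mul _ _).trans ?_
    simpa using esymm_tdeg N c
  · refine (esymm_tendsto x X hX c).congr fun N => ?_
    simp [div_eq_inv_mul]

lemma goodFn_pow_herm (a : ℕ) : ∀ c, GoodFn (fun x => x ^ a * hermN x c) (a + c) := by
  induction a with
  | zero => intro c; simpa using goodFn_herm c
  | succ a ih =>
    intro c
    match c with
    | 0 =>
      convert! ih 1 using 2 with x
      simp [hermN, pow_succ]
    | c + 1 =>
      have := ((ih (c+2)).smul ((c:ℝ)+2)).add ((ih c).mono (by omega : a + c ≤ a + (c + 2)))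
      rw [show a + 1 + (c + 1) = a + (c + 2) by ring]
      convert! this using 2 with x
      have hc : (c:ℝ) + 2 ≠ 0 := by positivity
      simp only [hermN]
      field_simp
      ring

lemma goodFn_pow (a : ℕ) : GoodFn (fun x => x ^ a) a := by
  simpa [hermN] using goodFn_pow_herm a 0

lemma exists_multi (n : ℕ) (d : ℕ) (p : MvPolynomial (Fin n) ℝ) (hp : p.totalDegree ≤ d) :
    ∃ Q : (N : ℕ) → MvPolynomial (Fin n × Fin N) ℝ,
      (∀ N, ∀ m ∈ (Q N).support, ∀ ij, m ij ≤ 1) ∧ (∀ N, (Q N).totalDegree ≤ d) ∧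
      ∀ (x : Fin n → ℝ) (X : (N : ℕ) → Fin n × Fin N → ℝ),
        (∀ i, RegArr (x i) (fun N j => X N (i, j))) →
        Tendsto (fun N => MvPolynomial.eval (X N) (Q N)) atTop (𝓝 (MvPolynomial.eval x p)) := by
  choose q h1 h2 h3 using goodFn_pow
  refine ⟨fun N => ∑ m ∈ p.support, MvPolynomial.C (p.coeff m) *
    ∏ i, MvPolynomial.rename (fun j : Fin N => (i, j)) (q (m i) N), fun N => ?_, fun N => ?_, ?_⟩
  · suffices H : ∀ ij, (∑ m ∈ p.support, MvPolynomial.C (p.coeff m) *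
        ∏ i, MvPolynomial.rename (fun j : Fin N => (i, j)) (q (m i) N)).degreeOf ij ≤ 1 from
      fun m hm ij => MvPolynomial.degreeOf_le_iff.1 (H ij) m hm
    rintro ⟨i0, j0⟩
    refine (MvPolynomial.degreeOf_sum_le _ _ _).trans (Finset.sup_le fun m _ => ?_)
    refine (MvPolynomial.degreeOf_C_mul_le _ _ _).trans ?_
    refine (MvPolynomial.degreeOf_prod_le _ _ _).trans ?_
    rw [Finset.sum_eq_single i0]
    · rw [MvPolynomial.degreeOf_rename_of_injective (f := fun j : Fin N => (i0, j))
        (fun a b h => by simpa using h)]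
      exact h1 _ _ _
    · intro i _ hi
      rw [← Nat.le_zero, MvPolynomial.degreeOf_le_iff]
      intro u hu
      obtain ⟨v, rfl, -⟩ := MvPolynomial.coeff_rename_ne_zero _ _ _ (MvPolynomial.mem_support_iff.1 hu)
      rw [Finsupp.mapDomain_of_notMem_range]
      rintro ⟨j, hj⟩
      exact hi (by simpa using congrArg Prod.fst hj)
    · simp
  · refine MvPolynomial.totalDegree_finsetSum_le fun m hm => ?_
    refine (MvPolynomial.totalDegree_mul _ _).trans ?_
    rw [MvPolynomial.totalDegree_C, zero_add]
    refine (MvPolynomial.totalDegree_finsetProd _ _).trans ?_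
    refine (Finset.sum_le_sum fun i _ =>
      (MvPolynomial.totalDegree_rename_le _ _).trans (h2 (m i) N)).trans ?_
    refine le_trans ?_ ((MvPolynomial.le_totalDegree hm).trans hp)
    rw [Finsupp.sum_fintype _ _ (by simp)]
  · intro x X hX
    rw [MvPolynomial.eval_eq']
    simp only [map_sum, map_mul, map_prod, MvPolynomial.eval_C, MvPolynomial.eval_rename]
    refine tendsto_finsetSum _ fun m _ => Tendsto.const_mul _ (tendsto_finsetProd _ fun i _ => ?_)
    exact h3 (m i) (x i) _ (hX i)

/-- The infinite product of standard Gaussians. -/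
noncomputable def gInf : Measure (ℕ → ℝ) := Measure.infinitePi fun _ : ℕ => gaussianReal 0 1

instance : IsProbabilityMeasure gInf := by unfold gInf; infer_instance

lemma slln (f : ℝ → ℝ) (hf : Measurable f) (hi : Integrable f (gaussianReal 0 1)) :
    ∀ᵐ ω ∂gInf, Tendsto (fun N : ℕ => (∑ j : Fin N, f (ω j)) / N) atTop
      (𝓝 (∫ y, f y ∂(gaussianReal 0 1))) := by
  have hmp : ∀ i : ℕ, MeasurePreserving (fun ω : ℕ → ℝ => ω i) gInf (gaussianReal 0 1) := fun i =>
    measurePreserving_eval_infinitePi (fun _ : ℕ => gaussianReal 0 1) i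
  have h := strong_law_ae_real (μ := gInf) (fun j ω => f (ω j)) ?_ ?_ ?_
  · have e : ∫ ω, f (ω 0) ∂gInf = ∫ y, f y ∂(gaussianReal 0 1) := by
      rw [← (hmp 0).map_eq, integral_map (measurable_pi_apply 0).aemeasurable hf.aestronglyMeasurable]
    rw [e] at h
    filter_upwards [h] with ω hω
    refine hω.congr fun N => ?_
    rw [Finset.sum_range]
  · exact (hmp 0).integrable_comp_of_integrable hi
  · intro i j hij
    exact (iIndepFun_infinitePi (P := fun _ : ℕ => gaussianReal 0 1) (X := fun _ => f)
      (fun _ => hf)).indepFun hij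
  · intro i
    refine ⟨(hf.comp (measurable_pi_apply i)).aemeasurable,
      (hf.comp (measurable_pi_apply 0)).aemeasurable, ?_⟩
    have : ∀ i : ℕ, Measure.map (fun ω : ℕ → ℝ => f (ω i)) gInf = (gaussianReal 0 1).map f := by
      intro i
      rw [← (hmp i).map_eq, Measure.map_map hf (by fun_prop)]
      rfl
    rw [this, this]

lemma gauss_int_abs_pow (i : ℕ) : Integrable (fun y : ℝ => |y| ^ i) (gaussianReal 0 1) := by
  have := (memLp_id_gaussianReal' (μ := 0) (v := 1) (i : ENNReal) (by simp)).integrable_norm_pow'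
  simpa using this

lemma gauss_sq : ∫ y, y ^ 2 ∂(gaussianReal 0 1) = 1 := by
  have h := variance_id_gaussianReal (μ := 0) (v := 1)
  rw [variance_of_integral_eq_zero (by fun_prop) (by simp)] at h
  simpa using h

/-- The deterministic array. -/
noncomputable def arr (x : ℝ) (ω : ℕ → ℝ) (N : ℕ) (j : Fin N) : ℝ :=
  x / Real.sqrt N + (ω j - (1 / (N : ℝ)) * ∑ j' : Fin N, ω j')

lemma reg_of_lim (x : ℝ) (ω : ℕ → ℝ)
    (h1 : Tendsto (fun N : ℕ => (∑ j : Fin N, ω j) / N) atTop (𝓝 0))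
    (h2 : Tendsto (fun N : ℕ => (∑ j : Fin N, ω j ^ 2) / N) atTop (𝓝 1))
    (h3 : ∀ i : ℕ, ∃ c, Tendsto (fun N : ℕ => (∑ j : Fin N, |ω j| ^ i) / N) atTop (𝓝 c)) :
    RegArr x (arr x ω) := by
  have hsq : Tendsto (fun N : ℕ => Real.sqrt N) atTop atTop :=
    Real.tendsto_sqrt_atTop.comp tendsto_natCast_atTop_atTop
  set a : ℕ → ℝ := fun N => x / Real.sqrt N - (∑ j : Fin N, ω j) / N with ha
  have hlim : Tendsto a atTop (𝓝 0) := by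
    simpa using (tendsto_const_nhds.div_atTop hsq).sub h1
  have harr : ∀ N j, arr x ω N j = a N + ω j := by
    intro N j; simp only [arr, ha]; ring
  have hpos : ∀ᶠ N : ℕ in atTop, 0 < (N : ℝ) := by
    filter_upwards [eventually_gt_atTop 0] with N hN
    exact_mod_cast hN
  intro i hi
  simp_rw [harr]
  rcases Nat.lt_or_ge i 3 with hi3 | hi3
  · interval_cases i
    · refine tendsto_const_nhds.congr' ?_
      filter_upwards [hpos] with N hN
      have hs : 0 < Real.sqrt N := Real.sqrt_pos.2 hN
      have hss : Real.sqrt N * Real.sqrt N = N := Real.mul_self_sqrt hN.le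
      simp only [limP, pow_one, if_true, Finset.sum_add_distrib, Finset.sum_const, Finset.card_univ,
        Fintype.card_fin, nsmul_eq_mul, ha]
      rw [eq_div_iff hs.ne', mul_sub, mul_div_cancel₀ _ hN.ne']
      rw [sub_add_cancel]
      field_simp
      linear_combination x * hss
    · have : Tendsto (fun N : ℕ => a N ^ 2 + 2 * a N * ((∑ j : Fin N, ω j) / N) +
          (∑ j : Fin N, ω j ^ 2) / N) atTop (𝓝 (0 ^ 2 + 2 * 0 * 0 + 1)) :=
        ((hlim.pow 2).add ((hlim.const_mul 2).mul h1)).add h2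
      simp only [limP]
      norm_num at this ⊢
      refine this.congr' ?_
      filter_upwards [hpos] with N hN
      have e : ∑ j : Fin N, (a N + ω j) ^ 2 =
          N * a N ^ 2 + 2 * a N * (∑ j : Fin N, ω j) + ∑ j : Fin N, ω j ^ 2 := by
        simp only [add_sq, Finset.sum_add_distrib, Finset.mul_sum]
        simp
      rw [e]
      field_simp
  · obtain ⟨c, hc⟩ := h3 i
    have hl : limP x i = 0 := by
      simp [limP, show i ≠ 1 by omega, show i ≠ 2 by omega]
    rw [hl]
    have hb : Tendsto (fun N : ℕ => (2 ^ (i - 1) * (|a N| ^ i + (∑ j : Fin N, |ω j| ^ i) / N)) /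
        Real.sqrt N ^ (i - 2)) atTop (𝓝 0) := by
      refine Tendsto.div_atTop (((hlim.abs.pow i).add hc).const_mul _) ?_
      exact (tendsto_pow_atTop (by omega)).comp hsq
    refine squeeze_zero_norm' ?_ hb
    filter_upwards [hpos] with N hN
    have hs : 0 < Real.sqrt N := Real.sqrt_pos.2 hN
    have hss : Real.sqrt N ^ 2 = N := Real.sq_sqrt hN.le
    have hsi : Real.sqrt N ^ i = N * Real.sqrt N ^ (i - 2) := by
      rw [← hss, Real.sqrt_sq (by positivity), ← pow_add]; congr 1; omega
    have hsum : |∑ j : Fin N, (a N + ω j) ^ i| ≤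
        2 ^ (i - 1) * (N * |a N| ^ i + ∑ j : Fin N, |ω j| ^ i) := by
      refine (Finset.abs_sum_le_sum_abs _ _).trans ?_
      have : ∀ j : Fin N, |(a N + ω j) ^ i| ≤ 2 ^ (i - 1) * (|a N| ^ i + |ω j| ^ i) := by
        intro j
        rw [abs_pow]
        exact (pow_le_pow_left₀ (abs_nonneg _) (abs_add_le _ _) i).trans
          (add_pow_le (abs_nonneg _) (abs_nonneg _) i)
      refine (Finset.sum_le_sum fun j _ => this j).trans (le_of_eq ?_)
      rw [← Finset.mul_sum, Finset.sum_add_distrib]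
      simp
    rw [Real.norm_eq_abs, abs_div, abs_of_pos (pow_pos hs i), hsi]
    refine (div_le_div_of_nonneg_right hsum (by positivity)).trans (le_of_eq ?_)
    field_simp

lemma ae_reg : ∀ᵐ ω ∂gInf, ∀ x, RegArr x (arr x ω) := by
  have h1 := slln (fun y => y) measurable_id (by
    have := (memLp_id_gaussianReal' (μ := 0) (v := 1) 1 (by simp))
    exact memLp_one_iff_integrable.1 this)
  have h2 := slln (fun y => y ^ 2) (by fun_prop) (by simpa using gauss_int_abs_pow 2)
  have h3 : ∀ᵐ ω ∂gInf, ∀ i : ℕ, _ := ae_all_iff.2 fun i : ℕ =>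
    slln (fun y => |y| ^ i) (by fun_prop) (gauss_int_abs_pow i)
  rw [gauss_sq] at h2
  rw [integral_id_gaussianReal] at h1
  filter_upwards [h1, h2, h3] with ω k1 k2 k3 x
  exact reg_of_lim x ω k1 k2 fun i => ⟨_, k3 i⟩

/-- Centering of the first `N` coordinates. -/
noncomputable def cen (N : ℕ) (ω : ℕ → ℝ) (j : Fin N) : ℝ :=
  ω j - (1 / (N : ℝ)) * ∑ j' : Fin N, ω j'

lemma measurable_cen (N : ℕ) : Measurable (cen N) := by
  unfold cen; fun_prop

lemma map_cen (N : ℕ) : gInf.map (cen N) = nuN N := by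
  have h : gInf.map (fun ω (j : Fin N) => ω (j : ℕ)) = stdGaussianPi (Fin N) := by
    unfold gInf stdGaussianPi
    rw [Measure.map_infinitePi_infinitePi_of_inj (P := fun _ : ℕ => gaussianReal 0 1)
      Fin.val_injective, Measure.infinitePi_eq_pi]
  rw [nuN, ← h, Measure.map_map (by fun_prop) (by fun_prop)]
  rfl

lemma conv_measure (n : ℕ) (p : MvPolynomial (Fin n) ℝ)
    (Q : (N : ℕ) → MvPolynomial (Fin n × Fin N) ℝ)
    (hQ : ∀ (x : Fin n → ℝ) (X : (N : ℕ) → Fin n × Fin N → ℝ),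
        (∀ i, RegArr (x i) (fun N j => X N (i, j))) →
        Tendsto (fun N => MvPolynomial.eval (X N) (Q N)) atTop (𝓝 (MvPolynomial.eval x p)))
    (μ : Measure (Fin n → ℝ)) [IsProbabilityMeasure μ] (δ : ℝ) (hδ : 0 < δ) :
    ∀ᶠ N in atTop, (μ.prod (Measure.pi fun _ : Fin n => nuN N))
              {q : (Fin n → ℝ) × (Fin n → Fin N → ℝ) |
                δ < |MvPolynomial.eval q.1 p -
                  MvPolynomial.eval
                    (fun ij : Fin n × Fin N =>
                      q.1 ij.1 / Real.sqrt N + q.2 ij.1 ij.2) (Q N)|} <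
              ENNReal.ofReal δ := by
  let P : Measure ((Fin n → ℝ) × (Fin n → ℕ → ℝ)) := μ.prod (Measure.pi fun _ : Fin n => gInf)
  have hmeas : ∀ N, Measurable fun q : (Fin n → ℝ) × (Fin n → Fin N → ℝ) =>
      MvPolynomial.eval (fun ij : Fin n × Fin N =>
                      q.1 ij.1 / Real.sqrt N + q.2 ij.1 ij.2) (Q N) := fun N =>
    (MvPolynomial.continuous_eval (Q N)).measurable.comp (by fun_prop)
  have hmeasp : Measurable fun x : Fin n → ℝ => MvPolynomial.eval x p :=
    (MvPolynomial.continuous_eval p).measurable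
  let Φ : (N : ℕ) → (Fin n → ℝ) × (Fin n → ℕ → ℝ) → (Fin n → ℝ) × (Fin n → Fin N → ℝ) :=
    fun N => Prod.map id (fun w i => cen N (w i))
  have hΦm : ∀ N, Measurable (Φ N) := fun N =>
    measurable_id.prodMap (measurable_pi_lambda _ fun i =>
      (measurable_cen N).comp (measurable_pi_apply i))
  have hΦ : ∀ N, P.map (Φ N) = μ.prod (Measure.pi fun _ : Fin n => nuN N) := by
    intro N
    have hw : Measurable (fun (w : Fin n → ℕ → ℝ) i => cen N (w i)) :=
      measurable_pi_lambda _ fun i => (measurable_cen N).comp (measurable_pi_apply i)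
    have : (Measure.pi fun _ : Fin n => gInf).map (fun w i => cen N (w i)) =
        Measure.pi fun _ : Fin n => nuN N := by
      have : IsProbabilityMeasure (gInf.map (cen N)) :=
        Measure.isProbabilityMeasure_map (measurable_cen N).aemeasurable
      rw [Measure.pi_map_pi (fun _ => (measurable_cen N).aemeasurable)]
      simp_rw [map_cen]
    rw [← this]
    simp only [P, Φ]
    rw [← Measure.map_prod_map _ _ measurable_id hw, Measure.map_id]
  have hae : ∀ᵐ q ∂P, Tendsto (fun N => MvPolynomial.eval (fun ij : Fin n × Fin N =>
      (Φ N q).1 ij.1 / Real.sqrt N + (Φ N q).2 ij.1 ij.2) (Q N)) atTop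
      (𝓝 (MvPolynomial.eval q.1 p)) := by
    have h1 : ∀ᵐ w ∂(Measure.pi fun _ : Fin n => gInf), ∀ i : Fin n, ∀ x, RegArr x (arr x (w i)) := by
      rw [ae_all_iff]
      intro i
      exact (measurePreserving_eval (fun _ : Fin n => gInf) i).quasiMeasurePreserving.ae ae_reg
    have h2 : ∀ᵐ q ∂P, ∀ i : Fin n, ∀ x, RegArr x (arr x (q.2 i)) :=
      Measure.quasiMeasurePreserving_snd.ae h1
    filter_upwards [h2] with q hq
    exact hQ q.1 _ fun i => hq i (q.1 i)
  have htm := tendstoInMeasure_of_tendsto_ae (μ := P)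
    (fun N => ((hmeas N).comp (hΦm N)).aestronglyMeasurable) hae
  have := htm (ENNReal.ofReal δ) (by simpa using hδ)
  filter_upwards [this.eventually (gt_mem_nhds (ENNReal.ofReal_pos.2 hδ))] with N hN
  refine lt_of_le_of_lt ?_ hN
  rw [← hΦ, Measure.map_apply (hΦm N)]
  · refine measure_mono fun q hq => ?_
    simp only [Set.mem_preimage, Set.mem_setOf_eq] at hq ⊢
    rw [edist_dist, dist_comm, Real.dist_eq]
    exact ENNReal.ofReal_le_ofReal hq.le
  · exact measurableSet_lt measurable_const ((hmeasp.comp measurable_fst).sub (hmeas N)).abs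

theorem exists_multilinear_approximant (d : ℕ) (hd : 1 ≤ d) :
    ∃ A : ℝ, 1 ≤ A ∧
      ∀ δ : ℝ, δ ∈ Set.Ioo (0 : ℝ) 1 →
      ∀ n : ℕ, 1 ≤ n →
      ∀ k : ℕ, A ≤ (k : ℝ) →
      ∀ η : ℝ, 0 < η →
        η ≤ δ ^ A * (n : ℝ) ^ (-A) * (k : ℝ) ^ (-(k : ℝ)) →
      ∀ μ : Measure (Fin n → ℝ), IsProbabilityMeasure μ →
        MomentMatches k η μ →
      ∀ p : MvPolynomial (Fin n) ℝ, p.totalDegree ≤ d →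
        (∑ m ∈ p.support, (p.coeff m) ^ 2 = 1) →
        ∃ N : ℕ, 1 ≤ N ∧
          ∃ phat : MvPolynomial (Fin n × Fin N) ℝ,
            (∀ m ∈ phat.support, ∀ ij, m ij ≤ 1) ∧
            phat.totalDegree ≤ d ∧
            (μ.prod (Measure.pi fun _ : Fin n => nuN N))
              {q : (Fin n → ℝ) × (Fin n → Fin N → ℝ) |
                δ < |MvPolynomial.eval q.1 p -
                  MvPolynomial.eval
                    (fun ij : Fin n × Fin N =>
                      q.1 ij.1 / Real.sqrt N + q.2 ij.1 ij.2) phat|} <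
              ENNReal.ofReal δ ∧
            ((stdGaussianPi (Fin n)).prod (Measure.pi fun _ : Fin n => nuN N))
              {q : (Fin n → ℝ) × (Fin n → Fin N → ℝ) |
                δ < |MvPolynomial.eval q.1 p -
                  MvPolynomial.eval
                    (fun ij : Fin n × Fin N =>
                      q.1 ij.1 / Real.sqrt N + q.2 ij.1 ij.2) phat|} <
              ENNReal.ofReal δ := by
  refine ⟨1, le_rfl, ?_⟩
  intro δ hδ n _ k _ η _ _ μ hμ _ p hp _
  obtain ⟨Q, h1, h2, h3⟩ := exists_multi n d p hp
  have : IsProbabilityMeasure (stdGaussianPi (Fin n)) := by unfold stdGaussianPi; infer_instance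
  obtain ⟨N, ⟨hA, hB⟩, hN⟩ := (((conv_measure n p Q h3 μ δ hδ.1).and
    (conv_measure n p Q h3 (stdGaussianPi (Fin n)) δ hδ.1)).and (eventually_ge_atTop 1)).exists
  exact ⟨N, hN, Q N, h1 N, h2 N, hA, hB⟩
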